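/- Let l and m be fixed positive integers. There exists a constant C > 0 such that for every integer k > l and every integer r with m ≤ r < k + m, the number of tuples a ∈ A_{k,l,m} whose associated polynomial satisfies p_a(r) = 0 is at most C·k^{l−1}. -/

import Mathlib

noncomputable section

/-- The falling factorial `(x)_j = x (x-1) ⋯ (x-j+1)`, with `(x)_0 = 1`. -/
def fall (x : ℤ) (j : ℕ) : ℤ := ∏ i ∈ Finset.range j, (x - (i : ℤ))

/-- `a ∈ A_{k,l,m}`: an `(l+1)`-tuple of nonnegative integers with
`∑_{j=0}^{l} (j+m) a_j = k + m`. -/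
def memA (k l m : ℕ) (a : Fin (l + 1) → ℕ) : Prop :=
  ∑ j : Fin (l + 1), ((j : ℕ) + m) * a j = k + m

/-- The polynomial
`p_a(x) = (x-m)_k - (-1)^k (k+m-1)_{k-l} ∑_{j=0}^{l} (-1)^j a_j (l+m-1)_{l-j} (x-m)_j`
associated to `a ∈ A_{k,l,m}`. -/
def pA (k l m : ℕ) (a : Fin (l + 1) → ℕ) (x : ℤ) : ℤ :=
  fall (x - (m : ℤ)) k -
    (-1 : ℤ) ^ k * fall ((k : ℤ) + (m : ℤ) - 1) (k - l) *
      ∑ j : Fin (l + 1), (-1 : ℤ) ^ (j : ℕ) * (a j : ℤ) * fall ((l : ℤ) + (m : ℤ) - 1) (l - (j : ℕ))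
        * fall (x - (m : ℤ)) (j : ℕ)

/-!
For `m ≤ r < k + m` the leading term `(r - m)_k` vanishes, so `p_a(r) = 0` is a homogeneous linear
equation in `a`. Together with the equation defining `A_{k,l,m}` it determines `a_0` and `a_1` from
the other `l - 1` entries: the coefficients of `a_0` and `a_1` are both positive in the defining
equation, whereas in the other equation the first is positive and the second nonpositive, so the
`2 × 2` determinant is nonzero. Since `m ≥ 1`, every entry of `a` is at most `k + 1`, which leaves
at most `(k + 2)^(l - 1)` tuples.
-/

open Finset

section LinearSystems

variable {ι R α : Type*}

theorem ncard_le_card_pow_of_injOn_restrict {A : Set (ι → α)} {s : Finset ι} {t : Finset α}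
    (hmem : ∀ a ∈ A, ∀ i ∈ s, a i ∈ t) (hinj : A.InjOn s.restrict) :
    A.ncard ≤ #t ^ #s := by
  classical
  have hmaps : ∀ a ∈ A, s.restrict a ∈ (Fintype.piFinset fun _ : s => t : Set (s → α)) :=
    fun a ha => mem_coe.2 <| Fintype.mem_piFinset.2 fun i => hmem a ha i i.2
  refine (Set.ncard_le_ncard_of_injOn _ hmaps hinj (finite_toSet _)).trans_eq ?_
  simp [Set.ncard_coe_finset, -Fintype.coe_piFinset]

variable [Fintype ι] [CommRing R] [NoZeroDivisors R] {u v : ι → R} {i j : ι}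

theorem eq_zero_of_dotProduct_eq_zero_of_det_ne_zero {x : ι → R}
    (hdet : u i * v j - u j * v i ≠ 0) (hu : u ⬝ᵥ x = 0) (hv : v ⬝ᵥ x = 0)
    (hx : ∀ t, t ≠ i ∧ t ≠ j → x t = 0) : x = 0 := by
  have hij : i ≠ j := fun h => hdet (by rw [h, sub_self])
  have dotProduct_eq (w : ι → R) : w ⬝ᵥ x = w i * x i + w j * x j :=
    Fintype.sum_eq_add i j hij fun t ht => by rw [hx t ht, mul_zero]
  rw [dotProduct_eq] at hu hv
  have hi : x i = 0 :=
    (mul_eq_zero.1 (by linear_combination v j * hu - u j * hv)).resolve_left hdet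
  have hj : x j = 0 :=
    (mul_eq_zero.1 (by linear_combination u i * hv - v i * hu)).resolve_left hdet
  funext t
  by_cases ht : t ≠ i ∧ t ≠ j
  · exact hx t ht
  · obtain rfl | rfl : t = i ∨ t = j := by tauto
    exacts [hi, hj]

theorem ncard_dotProduct_eq_dotProduct_eq_le (hdet : u i * v j - u j * v i ≠ 0) (c d : R)
    (t : Finset R) :
    {x : ι → R | (∀ n, x n ∈ t) ∧ u ⬝ᵥ x = c ∧ v ⬝ᵥ x = d}.ncard ≤
      #t ^ (Fintype.card ι - 2) := by
  classical
  have hij : i ≠ j := fun h => hdet (by rw [h, sub_self])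
  rw [← card_pair hij, ← card_compl]
  refine ncard_le_card_pow_of_injOn_restrict (fun x hx n _ => hx.1 n) ?_
  rintro x ⟨-, hux, hvx⟩ y ⟨-, huy, hvy⟩ hxy
  refine sub_eq_zero.1 (eq_zero_of_dotProduct_eq_zero_of_det_ne_zero hdet ?_ ?_ fun n hn => ?_)
  · rw [dotProduct_sub, hux, huy, sub_self]
  · rw [dotProduct_sub, hvx, hvy, sub_self]
  · exact sub_eq_zero.2 (congrFun hxy ⟨n, by simpa using hn⟩)

end LinearSystems

theorem fall_eq_eval_descPochhammer (x : ℤ) (j : ℕ) : fall x j = (descPochhammer ℤ j).eval x :=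
  (descPochhammer_eval_eq_prod_range j x).symm

theorem fall_pos {x : ℤ} {j : ℕ} (h : j ≤ x) : 0 < fall x j := by
  rw [fall_eq_eval_descPochhammer]
  exact descPochhammer_pos (by omega)

theorem fall_eq_zero_of_lt {x : ℤ} {j : ℕ} (hx : 0 ≤ x) (h : x < j) : fall x j = 0 := by
  lift x to ℕ using hx
  rw [fall_eq_eval_descPochhammer]
  exact descPochhammer_eval_coe_nat_of_lt (mod_cast h)

/-- The coefficient of `a j` in the linear form in `a` of which `pA k l m a r` is a nonzero
multiple whenever `m ≤ r < k + m`. -/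
def rootCoeff (l m : ℕ) (r : ℤ) (j : ℕ) : ℤ :=
  (-1) ^ j * fall (l + m - 1) (l - j) * fall (r - m) j

section

variable {k l m : ℕ} {a : Fin (l + 1) → ℕ} {r : ℤ}

theorem rootCoeff_zero_pos (hm : 0 < m) : 0 < rootCoeff l m r 0 := by
  simpa [rootCoeff, fall_eq_eval_descPochhammer (r - m)] using
    fall_pos (x := l + m - 1) (j := l) (by omega)

theorem rootCoeff_one_nonpos (hl : 0 < l) (hmr : m ≤ r) : rootCoeff l m r 1 ≤ 0 := by
  have hfall : 0 < fall (l + m - 1) (l - 1) := fall_pos (by omega)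
  have hcoeff : rootCoeff l m r 1 = -(fall (l + m - 1) (l - 1) * (r - m)) := by
    simp [rootCoeff, fall_eq_eval_descPochhammer (r - m)]
  rw [hcoeff, neg_nonpos]
  exact mul_nonneg hfall.le (sub_nonneg.2 hmr)

theorem det_rootCoeff_neg (hl : 0 < l) (hm : 0 < m) (hmr : m ≤ r) :
    m * rootCoeff l m r 1 - (1 + m) * rootCoeff l m r 0 < 0 := by
  have hone : m * rootCoeff l m r 1 ≤ 0 :=
    mul_nonpos_of_nonneg_of_nonpos (by positivity) (rootCoeff_one_nonpos hl hmr)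
  have hzero : 0 < (1 + m) * rootCoeff l m r 0 := mul_pos (by positivity) (rootCoeff_zero_pos hm)
  exact sub_neg.2 (hone.trans_lt hzero)

theorem pA_eq_zero_iff (hm : 0 < m) (hmr : m ≤ r) (hrk : r < k + m) :
    pA k l m a r = 0 ↔ (fun j : Fin (l + 1) => rootCoeff l m r j) ⬝ᵥ (fun j => (a j : ℤ)) = 0 := by
  have hlead : fall (r - m) k = 0 := fall_eq_zero_of_lt (by omega) (by omega)
  have hfactor : (-1) ^ k * fall (k + m - 1) (k - l) ≠ 0 :=
    mul_ne_zero (pow_ne_zero _ (by norm_num)) (fall_pos (by omega)).ne'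
  rw [pA, hlead, zero_sub, neg_eq_zero, mul_eq_zero, or_iff_right hfactor]
  simp only [dotProduct, rootCoeff, mul_right_comm]

theorem memA_iff_dotProduct_eq :
    memA k l m a ↔
      (fun j : Fin (l + 1) => (j + m : ℤ)) ⬝ᵥ (fun j => (a j : ℤ)) = k + m := by
  simp only [memA, dotProduct]
  norm_cast

theorem memA.apply_lt (hm : 0 < m) (ha : memA k l m a) (j : Fin (l + 1)) : a j < k + 2 := by
  have hterm : (j + m) * a j ≤ k + m :=
    (single_le_sum (f := fun i : Fin (l + 1) => (i + m) * a i)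
      (fun _ _ => Nat.zero_le _) (mem_univ j)).trans_eq ha
  by_contra! hlarge
  refine absurd hterm (not_le.2 ?_)
  calc k + m < m * (k + 2) := by nlinarith
    _ ≤ (j + m) * a j := Nat.mul_le_mul (Nat.le_add_left _ _) hlarge

theorem card_memA_and_pA_eq_zero_le (hl : 0 < l) (hm : 0 < m) (hmr : m ≤ r) (hrk : r < k + m) :
    Nat.card {a : Fin (l + 1) → ℕ // memA k l m a ∧ pA k l m a r = 0} ≤ (k + 2) ^ (l - 1) := by
  let u (j : Fin (l + 1)) : ℤ := j + m
  let v (j : Fin (l + 1)) : ℤ := rootCoeff l m r j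
  let box : Finset ℤ := Ico 0 (k + 2)
  let solutions : Set (Fin (l + 1) → ℤ) := {x | (∀ n, x n ∈ box) ∧ u ⬝ᵥ x = k + m ∧ v ⬝ᵥ x = 0}
  let one : Fin (l + 1) := ⟨1, by omega⟩
  have hdet : u 0 * v one - u one * v 0 ≠ 0 := by
    simpa [u, v, one] using (det_rootCoeff_neg hl hm hmr).ne
  have hmaps : ∀ a ∈ {a | memA k l m a ∧ pA k l m a r = 0}, (Nat.cast ∘ a) ∈ solutions := by
    rintro a ⟨ha, hroot⟩
    exact ⟨fun j => mem_Ico.2 ⟨Int.natCast_nonneg _, Int.ofNat_lt.2 (ha.apply_lt hm j)⟩,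
      memA_iff_dotProduct_eq.1 ha, (pA_eq_zero_iff hm hmr hrk).1 hroot⟩
  have hfinite : solutions.Finite :=
    (Set.Finite.pi' fun _ => box.finite_toSet).subset fun _ hx => hx.1
  have hbox : #box = k + 2 := Int.card_Ico 0 (k + 2)
  calc {a | memA k l m a ∧ pA k l m a r = 0}.ncard
      ≤ solutions.ncard :=
        Set.ncard_le_ncard_of_injOn _ hmaps Nat.cast_injective.comp_left.injOn hfinite
    _ ≤ #box ^ (Fintype.card (Fin (l + 1)) - 2) :=
        ncard_dotProduct_eq_dotProduct_eq_le hdet _ _ box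
    _ = (k + 2) ^ (l - 1) := by rw [hbox, Fintype.card_fin, Nat.add_sub_add_right l 1 1]

end

theorem count_small_root_general {k l m : ℕ} (hl : 0 < l) (hm : 0 < m) (hlk : l < k) {r : ℤ}
    (hmr : m ≤ r) (hrk : r < k + m) :
    Nat.card {a : Fin (l + 1) → ℕ // memA k l m a ∧ pA k l m a r = 0} ≤ (2 * k) ^ (l - 1) :=
  (card_memA_and_pA_eq_zero_le hl hm hmr hrk).trans (Nat.pow_le_pow_left (by omega) _)

/-- For fixed `l, m`, the number of `a ∈ A_{k,l,m}` for which a given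
integer `r ∈ [m, k+m)` is a root of `p_a` is `O_{l,m}(k^{l-1})`. -/
theorem count_small_root
    (l m : ℕ) (hl : 0 < l) (hm : 0 < m) :
    ∃ C : ℝ, 0 < C ∧ ∀ k : ℕ, l < k → ∀ r : ℤ, (m : ℤ) ≤ r → r < (k : ℤ) + m →
      (Nat.card {a : Fin (l + 1) → ℕ // memA k l m a ∧ pA k l m a r = 0} : ℝ) ≤
        C * (k : ℝ) ^ (l - 1) := by
  refine ⟨2 ^ (l - 1), by positivity, fun k hlk r hmr hrk => ?_⟩
  rw [← mul_pow]
  exact_mod_cast count_small_root_general hl hm hlk hmr hrk
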